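/- Let α_t, for t ∈ [0,1], be a family of group homomorphisms π → SU(3) such that for each g ∈ π the map t ↦ α_t(g) is continuous, and suppose that α_0 and α_1 are both reducible. Then α_0 and α_1 are conjugate: there exists U ∈ SU(3) with α_1(g) = U·α_0(g)·U⁻¹ for all g ∈ π. -/

import Mathlib

/-!
The conjugacy class of a reducible representation is determined by three traces, and these traces
are constant along the path.

*Constancy.* The hypothesis on `a, c` makes `π` perfect, so the determinant of its action on any
invariant subspace is `1`. Applied to an eigenspace of the central element `h`, with eigenvalue `μ`
and dimension `d ≤ 3`, this gives `μ ^ d = 1`, so `μ ^ 6 = 1`, for reducible and irreducible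
representations alike (`eigenvalue_h`). If `g ^ m` is a power of `h`, as for `g = x`, `y` and
`xy = z⁻¹`, every eigenvalue of `α_t g` is thus a root of unity of order dividing `6m`
(`eigenvalue_root`); so `tr α_t(g)` takes finitely many values and is constant (`trace_const`).

*Rigidity.* If `α` is reducible, an invariant subspace or its orthogonal complement is a line, on
which `π` acts trivially by perfectness. So `α` fixes a vector (`exists_fixed`) and is conjugate
to `1 ⊕ β` with `β` in `SU(2)`. A pair of elements of `SU(2)` is determined up to
conjugation by `tr A`, `tr B`, `tr AB`: diagonalise `A`, make the off-diagonal entry of `B` real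
and nonnegative by a diagonal conjugation, and read off the entries from the traces (`pair_conj`).
Since `π` is generated by `x` and `y` (`hom_ext_xy`), the two end points are conjugate.
-/

/-- Relators of the presentation
`⟨x,y,z,h | x^p = h^a, y^q = h^a, z^r = h^c, xyz = 1, h central⟩` of the fundamental group of
the Brieskorn homology sphere `Σ(p,q,r)`; the generators `x, y, z, h` are `0, 1, 2, 3 : Fin 4`. -/
def brieskornRels (p q r : ℕ) (a c : ℤ) : Set (FreeGroup (Fin 4)) :=
  { FreeGroup.of 0 ^ p * (FreeGroup.of 3 ^ a)⁻¹,
    FreeGroup.of 1 ^ q * (FreeGroup.of 3 ^ a)⁻¹,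
    FreeGroup.of 2 ^ r * (FreeGroup.of 3 ^ c)⁻¹,
    FreeGroup.of 0 * FreeGroup.of 1 * FreeGroup.of 2,
    FreeGroup.of 3 * FreeGroup.of 0 * (FreeGroup.of 0 * FreeGroup.of 3)⁻¹,
    FreeGroup.of 3 * FreeGroup.of 1 * (FreeGroup.of 1 * FreeGroup.of 3)⁻¹,
    FreeGroup.of 3 * FreeGroup.of 2 * (FreeGroup.of 2 * FreeGroup.of 3)⁻¹ }

/-- The fundamental group of the Brieskorn homology sphere `Σ(p,q,r)`. -/
abbrev BrieskornGroup (p q r : ℕ) (a c : ℤ) : Type := PresentedGroup (brieskornRels p q r a c)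

namespace BrieskornGroup
variable {p q r : ℕ} {a c : ℤ}
/-- The generator `x`. -/
def x : BrieskornGroup p q r a c := PresentedGroup.of 0
/-- The generator `y`. -/
def y : BrieskornGroup p q r a c := PresentedGroup.of 1
/-- The generator `z`. -/
def z : BrieskornGroup p q r a c := PresentedGroup.of 2
/-- The central generator `h`. -/
def h : BrieskornGroup p q r a c := PresentedGroup.of 3
end BrieskornGroup

open Matrix in
/-- The special unitary group `SU(n)` of `n × n` complex matrices with determinant `1`,
as a subgroup of the unitary group. -/
noncomputable def SU (n : ℕ) : Subgroup (Matrix.unitaryGroup (Fin n) ℂ) where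
  carrier := {A | (A : Matrix (Fin n) (Fin n) ℂ).det = 1}
  one_mem' := by simp
  mul_mem' := by
    intro a b ha hb
    show ((a * b : Matrix.unitaryGroup (Fin n) ℂ) : Matrix (Fin n) (Fin n) ℂ).det = 1
    rw [Submonoid.coe_mul, Matrix.det_mul]
    rw [Set.mem_setOf_eq] at ha hb
    rw [ha, hb, mul_one]
  inv_mem' := by
    intro a ha
    show ((a⁻¹ : Matrix.unitaryGroup (Fin n) ℂ) : Matrix (Fin n) (Fin n) ℂ).det = 1
    rw [Set.mem_setOf_eq] at ha
    have : ((a⁻¹ : Matrix.unitaryGroup (Fin n) ℂ) : Matrix (Fin n) (Fin n) ℂ)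
        = star (a : Matrix (Fin n) (Fin n) ℂ) := rfl
    rw [this]
    show (Matrix.conjTranspose _).det = 1
    rw [Matrix.det_conjTranspose, ha, star_one]

/-- The underlying matrix of an element of `SU(n)`. -/
noncomputable abbrev matSU {n : ℕ} (A : SU n) : Matrix (Fin n) (Fin n) ℂ := A.val.val

/-- A homomorphism `α : G → SU(3)` is irreducible if no complex subspace of `ℂ³` other than
`0` and `ℂ³` is invariant under `α(g)` for every `g`. -/
def IsIrrep {G : Type} [Group G] (α : G →* SU 3) : Prop :=
  ∀ W : Submodule ℂ (Fin 3 → ℂ),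
    (∀ g : G, ∀ v ∈ W, (matSU (α g)).mulVec v ∈ W) → W = ⊥ ∨ W = ⊤


/-! ### The group: relations and perfectness -/

namespace BrieskornGroup
variable {p q r : ℕ} {a c : ℤ}

lemma x_pow : (x : BrieskornGroup p q r a c) ^ p = h ^ a := by
  have := PresentedGroup.one_of_mem (rels := brieskornRels p q r a c)
    (x := FreeGroup.of 0 ^ p * (FreeGroup.of 3 ^ a)⁻¹) (by simp [brieskornRels])
  rw [map_mul, map_inv, mul_inv_eq_one, map_pow, map_zpow] at this
  exact this

lemma y_pow : (y : BrieskornGroup p q r a c) ^ q = h ^ a := by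
  have := PresentedGroup.one_of_mem (rels := brieskornRels p q r a c)
    (x := FreeGroup.of 1 ^ q * (FreeGroup.of 3 ^ a)⁻¹) (by simp [brieskornRels])
  rw [map_mul, map_inv, mul_inv_eq_one, map_pow, map_zpow] at this
  exact this

lemma z_pow : (z : BrieskornGroup p q r a c) ^ r = h ^ c := by
  have := PresentedGroup.one_of_mem (rels := brieskornRels p q r a c)
    (x := FreeGroup.of 2 ^ r * (FreeGroup.of 3 ^ c)⁻¹) (by simp [brieskornRels])
  rw [map_mul, map_inv, mul_inv_eq_one, map_pow, map_zpow] at this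
  exact this

lemma xyz : (x : BrieskornGroup p q r a c) * y * z = 1 := by
  have := PresentedGroup.one_of_mem (rels := brieskornRels p q r a c)
    (x := FreeGroup.of 0 * FreeGroup.of 1 * FreeGroup.of 2) (by simp [brieskornRels])
  rwa [map_mul, map_mul] at this

lemma hx : (h : BrieskornGroup p q r a c) * x = x * h := by
  have := PresentedGroup.one_of_mem (rels := brieskornRels p q r a c)
    (x := FreeGroup.of 3 * FreeGroup.of 0 * (FreeGroup.of 0 * FreeGroup.of 3)⁻¹)
    (by simp [brieskornRels])
  rw [map_mul, map_inv, mul_inv_eq_one, map_mul, map_mul] at this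
  exact this

lemma hy : (h : BrieskornGroup p q r a c) * y = y * h := by
  have := PresentedGroup.one_of_mem (rels := brieskornRels p q r a c)
    (x := FreeGroup.of 3 * FreeGroup.of 1 * (FreeGroup.of 1 * FreeGroup.of 3)⁻¹)
    (by simp [brieskornRels])
  rw [map_mul, map_inv, mul_inv_eq_one, map_mul, map_mul] at this
  exact this

lemma z_eq : (z : BrieskornGroup p q r a c) = (x * y)⁻¹ :=
  (inv_eq_of_mul_eq_one_right xyz).symm

/-- By `hac`, the central element is a word in `x` and `z`. -/
lemma h_eq (hac : a * ((p : ℤ) + q) * r + c * p * q = 1) :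
    (h : BrieskornGroup p q r a c) = (x ^ p) ^ (((p : ℤ) + q) * r) * (z ^ r) ^ ((p : ℤ) * q) := by
  rw [x_pow, z_pow, ← zpow_mul, ← zpow_mul, ← zpow_add]
  conv_lhs => rw [← zpow_one h, ← hac]
  congr 1; ring

/-- Two homomorphisms agreeing on `x` and `y` agree: `z = (xy)⁻¹` and `h` is a word in `x, z`. -/
lemma hom_ext_xy (hac : a * ((p : ℤ) + q) * r + c * p * q = 1) {G : Type*} [Group G]
    {f g : BrieskornGroup p q r a c →* G} (h1 : f x = g x) (h2 : f y = g y) : f = g := by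
  have h3 : f z = g z := by simp [z_eq, h1, h2]
  have h4 : f h = g h := by rw [h_eq hac]; simp [h1, h3]
  refine PresentedGroup.ext fun i => ?_
  fin_cases i
  exacts [h1, h2, h3, h4]

lemma h_comm (hac : a * ((p : ℤ) + q) * r + c * p * q = 1) (g : BrieskornGroup p q r a c) :
    h * g = g * h := by
  have : (MulAut.conj (h : BrieskornGroup p q r a c)).toMonoidHom = MonoidHom.id _ := by
    apply hom_ext_xy hac <;> simp [MulAut.conj_apply, hx, hy]
  have := DFunLike.congr_fun this g
  simpa [mul_inv_eq_iff_eq_mul] using this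

/-- The group is perfect: every homomorphism to a commutative group is trivial. -/
lemma hom_comm_trivial (hpq : Nat.Coprime p q) (hqr : Nat.Coprime q r) (hpr : Nat.Coprime p r)
    (hac : a * ((p : ℤ) + q) * r + c * p * q = 1) {G : Type*} [CommGroup G]
    (f : BrieskornGroup p q r a c →* G) : f = 1 := by
  have e1 : f x ^ p = f h ^ a := by rw [← map_pow, x_pow, map_zpow]
  have e2 : f y ^ q = f h ^ a := by rw [← map_pow, y_pow, map_zpow]
  have e3 : f z ^ r = f h ^ c := by rw [← map_pow, z_pow, map_zpow]
  have e4 : f x * f y * f z = 1 := by rw [← map_mul, ← map_mul, xyz, map_one]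
  -- raise `xyz = 1` to the power `pqr`
  have e5 : f h = 1 := by
    have : (f x ^ p) ^ (q * r) * (f y ^ q) ^ (p * r) * (f z ^ r) ^ (p * q) = 1 := by
      have := congrArg (· ^ (p * q * r)) e4
      simp only [mul_pow, one_pow] at this
      rw [← this, ← pow_mul, ← pow_mul, ← pow_mul]
      rw [show p * (q * r) = p * q * r by ring, show q * (p * r) = p * q * r by ring,
        show r * (p * q) = p * q * r by ring]
    rw [e1, e2, e3] at this
    rw [← zpow_natCast, ← zpow_natCast, ← zpow_natCast, ← zpow_mul, ← zpow_mul, ← zpow_mul,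
      ← zpow_add, ← zpow_add] at this
    rw [← zpow_one (f h), ← hac, ← this]
    congr 1; push_cast; ring
  rw [e5, one_zpow] at e1 e2 e3
  have e6 : f x = 1 := by
    have : f x ^ (q * r) = 1 := by
      have := congrArg (· ^ (q * r)) e4
      simp only [mul_pow, one_pow] at this
      rw [pow_mul (f y), e2, mul_comm q r, pow_mul (f z), e3] at this
      simpa [mul_comm] using this
    have := pow_gcd_eq_one.2 ⟨e1, this⟩
    rwa [Nat.Coprime.gcd_eq_one (hpq.mul_right hpr), pow_one] at this
  have e7 : f y = 1 := by
    have : f y ^ r = 1 := by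
      have := congrArg (· ^ r) e4
      simpa only [mul_pow, one_pow, e6, one_mul, e3, mul_one] using this
    have := pow_gcd_eq_one.2 ⟨e2, this⟩
    rwa [hqr.gcd_eq_one, pow_one] at this
  exact hom_ext_xy hac (by simpa using e6) (by simpa using e7)

end BrieskornGroup

/-! ### Traces of representations are constant along paths -/

open BrieskornGroup

lemma matSU_mul {n : ℕ} (A B : SU n) : matSU (A * B) = matSU A * matSU B := rfl

lemma matSU_one {n : ℕ} : matSU (1 : SU n) = 1 := rfl

section Det
variable {p q r : ℕ} {a c : ℤ}

/-- The determinant of the action on an invariant subspace, a one-dimensional character. -/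
noncomputable def detOn {G : Type} [Group G] (α : G →* SU 3) (W : Submodule ℂ (Fin 3 → ℂ))
    (hW : ∀ g : G, ∀ v ∈ W, (matSU (α g)).mulVec v ∈ W) : G →* ℂ where
  toFun g := LinearMap.det ((Matrix.toLin' (matSU (α g))).restrict
    (p := W) (q := W) (fun v hv => by simpa using hW g v hv))
  map_one' := by
    rw [← LinearMap.det_id (M := W)]
    congr 1
    ext v : 2
    simp [LinearMap.restrict_apply, matSU_one]
  map_mul' g k := by
    rw [← LinearMap.det_comp]
    congr 1
    ext v : 2
    simp [LinearMap.restrict_apply, matSU_mul]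

lemma detOn_eq_one (hpq : Nat.Coprime p q) (hqr : Nat.Coprime q r) (hpr : Nat.Coprime p r)
    (hac : a * ((p : ℤ) + q) * r + c * p * q = 1)
    (α : BrieskornGroup p q r a c →* SU 3) (W : Submodule ℂ (Fin 3 → ℂ))
    (hW : ∀ g, ∀ v ∈ W, (matSU (α g)).mulVec v ∈ W) (g : BrieskornGroup p q r a c) :
    detOn α W hW g = 1 := by
  have := DFunLike.congr_fun (hom_comm_trivial hpq hqr hpr hac (detOn α W hW).toHomUnits) g
  simpa using congrArg Units.val this

/-- If an element acts on an invariant subspace as a scalar `μ`, then `μ` to the power of the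
dimension is the determinant, hence `1`. -/
lemma scalar_pow_finrank (hpq : Nat.Coprime p q) (hqr : Nat.Coprime q r) (hpr : Nat.Coprime p r)
    (hac : a * ((p : ℤ) + q) * r + c * p * q = 1)
    (α : BrieskornGroup p q r a c →* SU 3) (W : Submodule ℂ (Fin 3 → ℂ))
    (hW : ∀ g, ∀ v ∈ W, (matSU (α g)).mulVec v ∈ W) (g : BrieskornGroup p q r a c)
    (μ : ℂ) (hμ : ∀ v ∈ W, (matSU (α g)).mulVec v = μ • v) :
    μ ^ Module.finrank ℂ W = 1 := by
  rw [← detOn_eq_one hpq hqr hpr hac α W hW g]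
  have : (Matrix.toLin' (matSU (α g))).restrict
    (p := W) (q := W) (fun v hv => by simpa using hW g v hv) = μ • LinearMap.id := by
    ext v : 2
    simp [LinearMap.restrict_apply, hμ]
  show _ = LinearMap.det _
  rw [this, LinearMap.det_smul, LinearMap.det_id, mul_one]

/-- Every eigenvalue of the central element is a sixth root of unity: its eigenspace is
invariant of dimension `1`, `2` or `3`. -/
lemma eigenvalue_h (hpq : Nat.Coprime p q) (hqr : Nat.Coprime q r) (hpr : Nat.Coprime p r)
    (hac : a * ((p : ℤ) + q) * r + c * p * q = 1)
    (α : BrieskornGroup p q r a c →* SU 3) (μ : ℂ) (v : Fin 3 → ℂ) (hv : v ≠ 0)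
    (hμ : (matSU (α h)).mulVec v = μ • v) : μ ^ 6 = 1 := by
  set W : Submodule ℂ (Fin 3 → ℂ) := Module.End.eigenspace (Matrix.toLin' (matSU (α h))) μ with hWd
  have mem (w) : w ∈ W ↔ (matSU (α h)).mulVec w = μ • w := by
    rw [hWd, Module.End.mem_eigenspace_iff, Matrix.toLin'_apply]
  have hW : ∀ g, ∀ v ∈ W, (matSU (α g)).mulVec v ∈ W := by
    intro g w hw
    rw [mem] at hw ⊢
    rw [Matrix.mulVec_mulVec, ← matSU_mul, ← map_mul, h_comm hac, map_mul, matSU_mul,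
      ← Matrix.mulVec_mulVec, hw, Matrix.mulVec_smul]
  have key := scalar_pow_finrank hpq hqr hpr hac α W hW h μ (fun w hw => (mem w).1 hw)
  have le : Module.finrank ℂ W ≤ 3 := by simpa using Submodule.finrank_le W
  have ne : Module.finrank ℂ W ≠ 0 := by
    intro h0
    rw [Submodule.finrank_eq_zero] at h0
    exact hv ((Submodule.mem_bot ℂ).1 (h0 ▸ (mem v).2 hμ))
  generalize Module.finrank ℂ W = d at key le ne
  obtain rfl | rfl | rfl : d = 1 ∨ d = 2 ∨ d = 3 := by omega
  · simp_all
  · rw [show 6 = 2 * 3 from rfl, pow_mul, key, one_pow]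
  · rw [show 6 = 3 * 2 from rfl, pow_mul, key, one_pow]

lemma matSU_zpow_mulVec {G : Type} [Group G] (α : G →* SU 3) (g : G) (μ : ℂ) (v : Fin 3 → ℂ)
    (hμ0 : μ ≠ 0) (hμ : (matSU (α g)).mulVec v = μ • v) (k : ℤ) :
    (matSU (α (g ^ k))).mulVec v = μ ^ k • v := by
  have inv : ∀ k : ℤ, (matSU (α (g ^ k))).mulVec v = μ ^ k • v →
      (matSU (α (g ^ (-k)))).mulVec v = μ ^ (-k) • v := by
    intro k hk
    have h1 : (matSU (α (g ^ (-k)))).mulVec ((matSU (α (g ^ k))).mulVec v) = v := by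
      rw [Matrix.mulVec_mulVec, ← matSU_mul, ← map_mul, ← zpow_add]
      simp [matSU_one]
    rw [hk, Matrix.mulVec_smul] at h1
    rw [zpow_neg μ, eq_inv_smul_iff₀ (zpow_ne_zero _ hμ0), h1]
  have nat : ∀ n : ℕ, (matSU (α (g ^ (n : ℤ)))).mulVec v = μ ^ (n : ℤ) • v := by
    intro n
    induction n with
    | zero => simp [matSU_one]
    | succ n ih =>
      push_cast at ih ⊢
      rw [zpow_add_one, map_mul, matSU_mul, ← Matrix.mulVec_mulVec, hμ, Matrix.mulVec_smul, ih,
        zpow_add_one₀ hμ0, smul_smul, mul_comm]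
  obtain ⟨n, rfl | rfl⟩ := k.eq_nat_or_neg
  · exact nat n
  · exact inv _ (nat n)

/-- If a positive power of `g` is a power of `h`, the eigenvalues of `α g` are roots of unity
whose order is bounded independently of `α`. -/
lemma eigenvalue_root (hpq : Nat.Coprime p q) (hqr : Nat.Coprime q r) (hpr : Nat.Coprime p r)
    (hac : a * ((p : ℤ) + q) * r + c * p * q = 1)
    (α : BrieskornGroup p q r a c →* SU 3) (g : BrieskornGroup p q r a c) (m : ℕ) (k : ℤ)
    (hg : g ^ m = h ^ k) (μ : ℂ)
    (hμ : (matSU (α g)).charpoly.IsRoot μ) : μ ^ (m * 6) = 1 := by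
  set X : Module.End ℂ (Fin 3 → ℂ) := Matrix.toLin' (matSU (α g)) with hX
  set H : Module.End ℂ (Fin 3 → ℂ) := Matrix.toLin' (matSU (α h)) with hH
  have hev : X.HasEigenvalue μ := by
    rw [Module.End.hasEigenvalue_iff_isRoot_charpoly]
    simpa [hX, Matrix.charpoly_toLin'] using hμ
  have mem (w) : w ∈ X.eigenspace μ ↔ (matSU (α g)).mulVec w = μ • w := by
    rw [Module.End.mem_eigenspace_iff, hX, Matrix.toLin'_apply]
  have hinv : ∀ w ∈ X.eigenspace μ, H w ∈ X.eigenspace μ := by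
    intro w hw
    rw [mem] at hw ⊢
    rw [hH, Matrix.toLin'_apply, Matrix.mulVec_mulVec, ← matSU_mul, ← map_mul, ← h_comm hac,
      map_mul, matSU_mul, ← Matrix.mulVec_mulVec, hw, Matrix.mulVec_smul]
  -- a common eigenvector of the commuting elements `g` and `h`
  have : Nontrivial (X.eigenspace μ) := Submodule.nontrivial_iff_ne_bot.2 hev
  obtain ⟨l, hl⟩ := Module.End.exists_eigenvalue (H.restrict hinv)
  obtain ⟨⟨v, hvX⟩, hv⟩ := hl.exists_hasEigenvector
  have hv0 : v ≠ 0 := fun h0 => hv.2 (by simpa using h0)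
  have hvH : (matSU (α h)).mulVec v = l • v := by
    simpa [hH, LinearMap.restrict_apply] using congrArg Subtype.val hv.apply_eq_smul
  rw [mem] at hvX
  have l6 := eigenvalue_h hpq hqr hpr hac α l v hv0 hvH
  have l0 : l ≠ 0 := by rintro rfl; norm_num at l6
  have μ0 : μ ≠ 0 := by
    rintro rfl
    have : (matSU (α (g⁻¹))).mulVec ((matSU (α g)).mulVec v) = v := by
      rw [Matrix.mulVec_mulVec, ← matSU_mul, ← map_mul]; simp [matSU_one]
    rw [hvX] at this
    exact hv0 (by simpa using this.symm)
  have e1 := matSU_zpow_mulVec α g μ v μ0 hvX m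
  have e2 := matSU_zpow_mulVec α h l v l0 hvH k
  rw [zpow_natCast, hg, e2] at e1
  have e3 : l ^ k = μ ^ m := by
    have := smul_left_injective ℂ hv0 e1
    simpa using this
  rw [pow_mul, ← e3, ← zpow_natCast, ← zpow_mul, mul_comm, zpow_mul]
  norm_cast
  rw [l6, one_zpow]

/-- The trace of `α_t g` is a continuous function of `t` with values in the finite set of sums of
three roots of unity of bounded order, hence constant. -/
lemma trace_const (hpq : Nat.Coprime p q) (hqr : Nat.Coprime q r) (hpr : Nat.Coprime p r)
    (hac : a * ((p : ℤ) + q) * r + c * p * q = 1)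
    (α : Set.Icc (0 : ℝ) 1 → (BrieskornGroup p q r a c →* SU 3))
    (hcont : ∀ g : BrieskornGroup p q r a c, Continuous fun t => matSU (α t g))
    (g : BrieskornGroup p q r a c) (m : ℕ) (hm : 0 < m) (k : ℤ)
    (hg : g ^ m = h ^ k) (s t : Set.Icc (0 : ℝ) 1) :
    (matSU (α s g)).trace = (matSU (α t g)).trace := by
  set R : Set ℂ := {μ | μ ^ (m * 6) = 1} with hR
  have Rfin : R.Finite := by
    refine (Polynomial.nthRootsFinset (m * 6) (1 : ℂ)).finite_toSet.subset ?_
    intro μ hμ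
    exact (Polynomial.mem_nthRootsFinset (show 0 < m * 6 by omega) 1).2 hμ
  set S : Set ℂ := Set.image2 (· + ·) (Set.image2 (· + ·) R R) R with hS
  have Sfin : S.Finite := (Rfin.image2 _ Rfin).image2 _ Rfin
  have hmem : ∀ u, (matSU (α u g)).trace ∈ S := by
    intro u
    rw [Matrix.trace_eq_sum_roots_charpoly]
    have hc : (matSU (α u g)).charpoly.roots.card = 3 := by
      rw [← (IsAlgClosed.splits (matSU (α u g)).charpoly).natDegree_eq_card_roots,
        Matrix.charpoly_natDegree_eq_dim, Fintype.card_fin]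
    have hr : ∀ μ ∈ (matSU (α u g)).charpoly.roots, μ ∈ R := fun μ hμ =>
      eigenvalue_root hpq hqr hpr hac (α u) g m k hg μ (Polynomial.isRoot_of_mem_roots hμ)
    obtain ⟨x, y, z, e⟩ := Multiset.card_eq_three.1 hc
    rw [e] at hr ⊢
    simp only [Multiset.insert_eq_cons, Multiset.mem_cons, Multiset.mem_singleton] at hr
    refine ⟨x + y, ⟨x, hr x (by simp), y, hr y (by simp), rfl⟩, z, hr z (by simp), ?_⟩
    simp [add_assoc]
  have hsub : (Set.range fun u => (matSU (α u g)).trace).Subsingleton :=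
    Sfin.countable.isTotallyDisconnected _ (by rintro _ ⟨u, rfl⟩; exact hmem u)
      (isPreconnected_range (hcont g).matrix_trace)
  exact hsub ⟨s, rfl⟩ ⟨t, rfl⟩

end Det

/-! ### Reducible representations fix a vector -/

section FixedVector
variable {p q r : ℕ} {a c : ℤ}

/-- The group acts on an invariant line through a character, hence trivially. -/
lemma fixed_of_finrank_one (hpq : Nat.Coprime p q) (hqr : Nat.Coprime q r) (hpr : Nat.Coprime p r)
    (hac : a * ((p : ℤ) + q) * r + c * p * q = 1)
    (α : BrieskornGroup p q r a c →* SU 3) (W : Submodule ℂ (Fin 3 → ℂ))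
    (hW : ∀ g, ∀ v ∈ W, (matSU (α g)).mulVec v ∈ W) (h1 : Module.finrank ℂ W = 1) :
    ∃ v : Fin 3 → ℂ, v ≠ 0 ∧ ∀ g, (matSU (α g)).mulVec v = v := by
  obtain ⟨⟨v, hv⟩, hv0, hspan⟩ := finrank_eq_one_iff'.1 h1
  refine ⟨v, fun h0 => hv0 (by simpa using h0), fun g => ?_⟩
  obtain ⟨μ, hμ⟩ := hspan ⟨_, hW g v hv⟩
  replace hμ : μ • v = (matSU (α g)).mulVec v := congrArg Subtype.val hμ
  have := scalar_pow_finrank hpq hqr hpr hac α W hW g μ (fun w hw => by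
    obtain ⟨l, hl⟩ := hspan ⟨w, hw⟩
    replace hl : l • v = w := congrArg Subtype.val hl
    rw [← hl, Matrix.mulVec_smul, ← hμ, smul_comm])
  rw [h1, pow_one] at this
  rw [← hμ, this, one_smul]

lemma matSU_inv {n : ℕ} (A : SU n) : matSU A⁻¹ = (matSU A).conjTranspose := rfl

/-- The orthogonal complement of a subspace of `ℂ³` for the standard Hermitian form. -/
noncomputable def orthCompl (W : Submodule ℂ (Fin 3 → ℂ)) : Submodule ℂ (Fin 3 → ℂ) :=
  ((W.comap (WithLp.linearEquiv 2 ℂ (Fin 3 → ℂ)).toLinearMap)ᗮ).map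
    (WithLp.linearEquiv 2 ℂ (Fin 3 → ℂ)).toLinearMap

lemma mem_orthCompl (W : Submodule ℂ (Fin 3 → ℂ)) (n : Fin 3 → ℂ) :
    n ∈ orthCompl W ↔ ∀ w ∈ W, star w ⬝ᵥ n = 0 := by
  unfold orthCompl
  rw [Submodule.mem_map_equiv, Submodule.mem_orthogonal]
  constructor
  · intro h w hw
    have := h (WithLp.toLp 2 w) hw
    rw [EuclideanSpace.inner_eq_star_dotProduct] at this
    rw [dotProduct_comm]
    exact this
  · intro h w hw
    rw [EuclideanSpace.inner_eq_star_dotProduct, dotProduct_comm]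
    exact h _ hw

lemma finrank_orthCompl (W : Submodule ℂ (Fin 3 → ℂ)) :
    Module.finrank ℂ W + Module.finrank ℂ (orthCompl W) = 3 := by
  have := Submodule.finrank_add_finrank_orthogonal
    (W.comap (WithLp.linearEquiv 2 ℂ (Fin 3 → ℂ)).toLinearMap)
  rw [finrank_euclideanSpace, Fintype.card_fin] at this
  unfold orthCompl
  rw [LinearEquiv.finrank_map_eq]
  refine Eq.trans (congrArg (· + _) ?_) this
  rw [Submodule.comap_equiv_eq_map_symm, LinearEquiv.finrank_map_eq]

/-- A reducible representation fixes a nonzero vector: either the invariant subspace or its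
orthogonal complement is a line, on which the perfect group acts trivially. -/
lemma exists_fixed (hpq : Nat.Coprime p q) (hqr : Nat.Coprime q r) (hpr : Nat.Coprime p r)
    (hac : a * ((p : ℤ) + q) * r + c * p * q = 1)
    (α : BrieskornGroup p q r a c →* SU 3) (hα : ¬ IsIrrep α) :
    ∃ v : Fin 3 → ℂ, v ≠ 0 ∧ ∀ g, (matSU (α g)).mulVec v = v := by
  unfold IsIrrep at hα
  push Not at hα
  obtain ⟨W, hW, hbot, htop⟩ := hα
  have ne0 : Module.finrank ℂ W ≠ 0 := fun h0 => hbot (Submodule.finrank_eq_zero.1 h0)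
  have lt3 : Module.finrank ℂ W < 3 := by
    simpa using Submodule.finrank_lt htop
  obtain h1 | h2 : Module.finrank ℂ W = 1 ∨ Module.finrank ℂ W = 2 := by omega
  · exact fixed_of_finrank_one hpq hqr hpr hac α W hW h1
  · refine fixed_of_finrank_one hpq hqr hpr hac α (orthCompl W) ?_ ?_
    · intro g n hn
      rw [mem_orthCompl] at hn ⊢
      intro w hw
      have := hn _ (hW g⁻¹ w hw)
      rwa [map_inv, matSU_inv, Matrix.star_mulVec, Matrix.conjTranspose_conjTranspose,
        ← Matrix.dotProduct_mulVec] at this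
    · have := finrank_orthCompl W
      omega

end FixedVector

/-! ### Pairs with a common fixed vector are determined by traces -/

section NormalForm
open Matrix ComplexConjugate

/-- The block matrix `1 ⊕ [[s, -t̄], [t, s̄]]`; for `|s|² + |t|² = 1` these are the elements of
`1 ⊕ SU(2)`. -/
def Q (s t : ℂ) : Matrix (Fin 3) (Fin 3) ℂ := !![1, 0, 0; 0, s, -conj t; 0, t, conj s]

lemma Q_mul (s t u w : ℂ) : Q s t * Q u w = Q (s * u - conj t * w) (t * u + conj s * w) := by
  ext i j
  fin_cases i <;> fin_cases j <;> simp [Q, Matrix.mul_apply, Fin.sum_univ_three] <;> ring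

lemma Q_one : Q 1 0 = 1 := by
  ext i j
  fin_cases i <;> fin_cases j <;> simp [Q]

lemma Q_star (s t : ℂ) : star (Q s t) = Q (conj s) (-t) := by
  ext i j
  fin_cases i <;> fin_cases j <;> simp [Q, Matrix.star_apply]

lemma Q_trace (s t : ℂ) : (Q s t).trace = 1 + 2 * (s.re : ℂ) := by
  rw [Matrix.trace_fin_three]
  simp only [Q, Matrix.of_apply, Matrix.cons_val', Matrix.cons_val_zero, Matrix.cons_val_one,
    Matrix.cons_val]
  rw [add_assoc, Complex.add_conj]
  push_cast
  ring

lemma Q_mem {s t : ℂ} (hst : s * conj s + t * conj t = 1) :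
    Q s t ∈ Matrix.unitaryGroup (Fin 3) ℂ := by
  rw [Matrix.mem_unitaryGroup_iff, Q_star, Q_mul, ← Q_one]
  congr 1
  · linear_combination hst
  · ring

/-- An element of `SU(3)` fixing the first basis vector lies in `1 ⊕ SU(2)`. -/
lemma eq_Q {N : Matrix (Fin 3) (Fin 3) ℂ} (hN : N ∈ Matrix.unitaryGroup (Fin 3) ℂ)
    (hdet : N.det = 1) (hfix : N.mulVec (Pi.single 0 1) = Pi.single 0 1) :
    ∃ s t : ℂ, s * conj s + t * conj t = 1 ∧ N = Q s t := by
  have hU := Matrix.mem_unitaryGroup_iff'.1 hN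
  have hfix' : (star N).mulVec (Pi.single 0 1) = Pi.single 0 1 := by
    conv_lhs => rw [← hfix, Matrix.mulVec_mulVec, hU, Matrix.one_mulVec]
  rw [Matrix.mulVec_single_one] at hfix hfix'
  have c0 : N 0 0 = 1 := by simpa using congrFun hfix 0
  have c1 : N 1 0 = 0 := by simpa using congrFun hfix 1
  have c2 : N 2 0 = 0 := by simpa using congrFun hfix 2
  have r1 : N 0 1 = 0 := by simpa using congrFun hfix' 1
  have r2 : N 0 2 = 0 := by simpa using congrFun hfix' 2
  rw [Matrix.det_fin_three, c0, c1, c2, r1, r2] at hdet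
  have u11 := congrFun (congrFun hU 1) 1
  have u12 := congrFun (congrFun hU 1) 2
  simp [Matrix.mul_apply, Fin.sum_univ_three, r1, r2] at u11 u12
  have hD : N 2 2 = conj (N 1 1) := by
    linear_combination conj (N 1 1) * hdet - N 2 2 * u11 + N 2 1 * u12
  have hB : N 1 2 = - conj (N 2 1) := by
    linear_combination - conj (N 2 1) * hdet - N 1 2 * u11 + N 1 1 * u12
  refine ⟨N 1 1, N 2 1, by linear_combination u11, ?_⟩
  ext i j
  fin_cases i <;> fin_cases j <;> simp [Q, c0, c1, c2, r1, r2, hD, hB]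

/-- Diagonalisation in `1 ⊕ SU(2)`, with the eigenvalue in the closed upper half plane first. -/
lemma Q_diag {s t : ℂ} (hst : s * conj s + t * conj t = 1) :
    ∃ u w μ : ℂ, u * conj u + w * conj w = 1 ∧ μ * conj μ = 1 ∧ 0 ≤ μ.im ∧
      Q s t * Q u w = Q u w * Q μ 0 := by
  by_cases ht : t = 0
  · subst ht
    simp only [zero_mul, add_zero] at hst
    by_cases hs : 0 ≤ s.im
    · exact ⟨1, 0, s, by simp, hst, hs, by simp [Q_mul]⟩
    · exact ⟨0, 1, conj s, by simp, by simpa [mul_comm] using hst, by simp; linarith,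
        by simp [Q_mul]⟩
  · have hre : s.re ^ 2 + s.im ^ 2 + (t.re ^ 2 + t.im ^ 2) = 1 := by
      have := congrArg Complex.re hst
      simp at this
      linarith
    have htpos : 0 < t.re ^ 2 + t.im ^ 2 := by
      have := Complex.normSq_pos.2 ht
      rw [Complex.normSq_apply] at this
      nlinarith
    set d := Real.sqrt (1 - s.re ^ 2) with hd
    have hd2 : d ^ 2 = 1 - s.re ^ 2 := Real.sq_sqrt (by nlinarith [sq_nonneg s.im])
    set μ : ℂ := ⟨s.re, d⟩ with hμ
    -- `(t̄, s - μ)` is an eigenvector for `μ`, of length `k`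
    set k := Real.sqrt (t.re ^ 2 + t.im ^ 2 + (s.im - d) ^ 2) with hk
    have hk2 : k ^ 2 = t.re ^ 2 + t.im ^ 2 + (s.im - d) ^ 2 := Real.sq_sqrt (by positivity)
    have hk0 : k ≠ 0 := by
      intro h0
      rw [h0] at hk2
      nlinarith [sq_nonneg (s.im - d)]
    have hk0' : (k : ℂ) ≠ 0 := by exact_mod_cast hk0
    have e1 : t * conj t + (s - μ) * conj (s - μ) = (k : ℂ) ^ 2 := by
      rw [← Complex.ofReal_pow, hk2]
      rw [Complex.mul_conj, Complex.mul_conj, ← Complex.ofReal_add, Complex.normSq_apply,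
        Complex.normSq_apply]
      congr 1
      simp [hμ]
      ring
    have e2 : t * conj t + conj s * (s - μ) = (s - μ) * μ := by
      apply Complex.ext <;> simp [hμ]
      · linear_combination hre - hd2
      · ring
    refine ⟨conj t / k, (s - μ) / k, μ, ?_, ?_, Real.sqrt_nonneg _, ?_⟩
    · simp only [map_div₀, Complex.conj_conj, Complex.conj_ofReal]
      field_simp
      linear_combination e1
    · apply Complex.ext <;> simp [hμ]
      · linear_combination hd2
      · ring
    · rw [Q_mul, Q_mul]
      congr 1
      · simp; ring
      · simp only [map_div₀, Complex.conj_conj, Complex.conj_ofReal]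
        field_simp
        linear_combination e2

/-- Conjugating by a diagonal element makes the lower left entry real and nonnegative. -/
lemma Q_phase (s t : ℂ) :
    ∃ (e : ℂ) (τ : ℝ), e * conj e = 1 ∧ 0 ≤ τ ∧ Q s t * Q e 0 = Q e 0 * Q s τ := by
  by_cases ht : t = 0
  · exact ⟨1, 0, by simp, le_rfl, by simp [ht, Q_mul]⟩
  · have hn : (‖t‖ : ℂ) ≠ 0 := by simpa using ht
    obtain ⟨e, he⟩ := IsAlgClosed.exists_pow_nat_eq (conj t / ‖t‖) (n := 2) (by norm_num)
    have htt : t * conj t = (‖t‖ : ℂ) ^ 2 := by rw [Complex.mul_conj']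
    have hnorm : ‖e‖ = 1 := by
      have := congrArg norm he
      rw [norm_pow, norm_div, RCLike.norm_conj, Complex.norm_real, norm_norm,
        div_self (by simpa using ht)] at this
      exact (pow_eq_one_iff_of_nonneg (norm_nonneg _) (by norm_num)).1 this
    have hee : e * conj e = 1 := by rw [Complex.mul_conj', hnorm]; simp
    refine ⟨e, ‖t‖, hee, norm_nonneg _, ?_⟩
    have key : t * e ^ 2 = ‖t‖ := by
      rw [he]; field_simp; linear_combination htt
    rw [Q_mul, Q_mul]
    congr 1
    · simp; ring
    · simp only [mul_zero, add_zero, zero_mul, zero_add]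
      linear_combination conj e * key - t * e * hee

/-- The parameters `μ, σ, τ` are those of a normal form `(Q μ 0, Q σ τ)`, up to simultaneous
conjugation, of a pair in `1 ⊕ SU(2)`. The first matrix is diagonal with `μ` in the closed upper
half circle; if it is central (`μ = ±1`), the second one is diagonalised as well. -/
structure IsNF (μ σ : ℂ) (τ : ℝ) : Prop where
  normμ : μ * conj μ = 1
  norm : σ * conj σ + (τ : ℂ) * conj (τ : ℂ) = 1
  im : 0 ≤ μ.im
  nonneg : 0 ≤ τ
  degenerate : μ.im = 0 → τ = 0 ∧ 0 ≤ σ.im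

/-- The normal form is determined by the three traces. -/
lemma IsNF.unique {μ σ μ' σ' : ℂ} {τ τ' : ℝ} (h : IsNF μ σ τ) (h' : IsNF μ' σ' τ')
    (e1 : μ.re = μ'.re) (e2 : σ.re = σ'.re) (e3 : (μ * σ).re = (μ' * σ').re) :
    μ = μ' ∧ σ = σ' ∧ τ = τ' := by
  have n1 : μ.re ^ 2 + μ.im ^ 2 = 1 := by
    have := congrArg Complex.re h.normμ; simp at this; linarith
  have n1' : μ'.re ^ 2 + μ'.im ^ 2 = 1 := by
    have := congrArg Complex.re h'.normμ; simp at this; linarith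
  have n2 : σ.re ^ 2 + σ.im ^ 2 + τ ^ 2 = 1 := by
    have := congrArg Complex.re h.norm; simp at this; linarith
  have n2' : σ'.re ^ 2 + σ'.im ^ 2 + τ' ^ 2 = 1 := by
    have := congrArg Complex.re h'.norm; simp at this; linarith
  have i1 : μ.im = μ'.im := by
    refine (pow_left_inj₀ h.im h'.im (n := 2) (by norm_num)).1 ?_
    rw [← e1] at n1'; linarith
  have i2 : σ.im = σ'.im := by
    by_cases h0 : μ.im = 0
    · obtain ⟨t0, s0⟩ := h.degenerate h0
      obtain ⟨t0', s0'⟩ := h'.degenerate (i1 ▸ h0)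
      refine (pow_left_inj₀ s0 s0' (n := 2) (by norm_num)).1 ?_
      rw [← e2, t0'] at n2'; rw [t0] at n2; linarith
    · rw [Complex.mul_re, Complex.mul_re, ← e1, ← e2, ← i1] at e3
      exact mul_left_cancel₀ h0 (by linarith)
  refine ⟨Complex.ext e1 i1, Complex.ext e2 i2, ?_⟩
  refine (pow_left_inj₀ h.nonneg h'.nonneg (n := 2) (by norm_num)).1 ?_
  rw [← e2, ← i2] at n2'; linarith

/-- Every pair in `1 ⊕ SU(2)` has a simultaneous normal form. -/
lemma Q_pair_normal {s t s' t' : ℂ} (h : s * conj s + t * conj t = 1)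
    (h' : s' * conj s' + t' * conj t' = 1) :
    ∃ K ∈ Matrix.unitaryGroup (Fin 3) ℂ, ∃ (μ σ : ℂ) (τ : ℝ), IsNF μ σ τ ∧
      Q s t * K = K * Q μ 0 ∧ Q s' t' * K = K * Q σ τ := by
  obtain ⟨u, w, μ, huw, hμ, him, hK⟩ := Q_diag h
  have hU := Matrix.mem_unitaryGroup_iff.1 (Q_mem huw)
  by_cases h0 : μ.im = 0
  · -- the first matrix is central in `1 ⊕ SU(2)`, so the second one can be diagonalised freely
    have hconj : conj μ = μ := Complex.conj_eq_iff_im.2 h0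
    have comm : ∀ x y : ℂ, Q μ 0 * Q x y = Q x y * Q μ 0 := by
      intro x y
      rw [Q_mul, Q_mul, hconj]
      congr 1 <;> simp <;> ring
    have hA : Q s t = Q μ 0 := by
      have := congrArg (· * star (Q u w)) hK
      simp only [← comm] at this
      rwa [mul_assoc, hU, mul_assoc, hU, mul_one, mul_one] at this
    obtain ⟨u', w', σ, huw', hσ, him', hK'⟩ := Q_diag h'
    refine ⟨Q u' w', Q_mem huw', μ, σ, 0, ⟨hμ, by simpa using hσ, him, le_rfl, fun _ => ⟨rfl, him'⟩⟩,
      ?_, by simpa using hK'⟩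
    rw [hA, comm]
  · obtain ⟨x, y, hxy⟩ : ∃ x y, star (Q u w) * Q s' t' * Q u w = Q x y := by
      rw [Q_star, Q_mul, Q_mul]
      exact ⟨_, _, rfl⟩
    have hB : Q s' t' * Q u w = Q u w * Q x y := by
      rw [← hxy, mul_assoc, ← mul_assoc (Q u w), hU, one_mul]
    obtain ⟨e, τ, he, hτ, hph⟩ := Q_phase x y
    have he' : e * conj e + 0 * conj 0 = 1 := by simpa using he
    refine ⟨Q u w * Q e 0, mul_mem (Q_mem huw) (Q_mem he'), μ, x, τ,
      ⟨hμ, ?_, him, hτ, fun h => absurd h h0⟩, ?_, ?_⟩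
    · have hm : Q x τ ∈ Matrix.unitaryGroup (Fin 3) ℂ := by
        have : Q x τ = star (Q e 0) * (star (Q u w) * Q s' t' * Q u w) * Q e 0 := by
          rw [hxy, mul_assoc, hph, ← mul_assoc,
            Matrix.mem_unitaryGroup_iff'.1 (Q_mem he'), one_mul]
        rw [this]
        exact mul_mem (mul_mem (Unitary.star_mem (Q_mem he')) (mul_mem (mul_mem
          (Unitary.star_mem (Q_mem huw)) (Q_mem h')) (Q_mem huw))) (Q_mem he')
      have := congrFun (congrFun (Matrix.mem_unitaryGroup_iff'.1 hm) 1) 1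
      simp [Q, Matrix.mul_apply, Fin.sum_univ_three] at this
      simp only [Complex.conj_ofReal]
      linear_combination this
    · rw [← mul_assoc, hK, mul_assoc, mul_assoc]
      congr 1
      rw [Q_mul, Q_mul]
      congr 1 <;> simp
      ring
    · rw [← mul_assoc, hB, mul_assoc, hph, mul_assoc]

/-- Every nonzero vector is proportional to the first column of some unitary matrix. -/
lemma exists_unitary_col {v : Fin 3 → ℂ} (hv : v ≠ 0) :
    ∃ U ∈ Matrix.unitaryGroup (Fin 3) ℂ, ∃ k : ℂ, U.mulVec (Pi.single 0 1) = k • v := by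
  set e : EuclideanSpace ℂ (Fin 3) := WithLp.toLp 2 v with he
  have he0 : e ≠ 0 := by simpa [he] using hv
  have ho : Orthonormal ℂ (({0} : Set (Fin 3)).domRestrict
      (fun _ => ((‖e‖⁻¹ : ℝ) : ℂ) • e)) := by
    constructor
    · intro i
      rw [Set.domRestrict_apply, norm_smul, Complex.norm_real, norm_inv, norm_norm,
        inv_mul_cancel₀ (norm_ne_zero_iff.2 he0)]
    · intro i j hij
      exact absurd (Subsingleton.elim i j) hij
  obtain ⟨b, hb⟩ := ho.exists_orthonormalBasis_extension_of_card_eq (by simp)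
  refine ⟨(EuclideanSpace.basisFun (Fin 3) ℂ).toBasis.toMatrix b,
    OrthonormalBasis.toMatrix_orthonormalBasis_mem_unitary _ _, ((‖e‖⁻¹ : ℝ) : ℂ), ?_⟩
  rw [Matrix.mulVec_single_one]
  ext i
  simp [Module.Basis.toMatrix_apply, hb 0 rfl, he]

/-- Simultaneous normal form of two elements of `SU(3)` with a common fixed vector. -/
lemma pair_normal {A B : Matrix (Fin 3) (Fin 3) ℂ} (hA : A ∈ Matrix.unitaryGroup (Fin 3) ℂ)
    (hB : B ∈ Matrix.unitaryGroup (Fin 3) ℂ) (dA : A.det = 1) (dB : B.det = 1)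
    {v : Fin 3 → ℂ} (hv : v ≠ 0) (fA : A.mulVec v = v) (fB : B.mulVec v = v) :
    ∃ K ∈ Matrix.unitaryGroup (Fin 3) ℂ, ∃ (μ σ : ℂ) (τ : ℝ), IsNF μ σ τ ∧
      A * K = K * Q μ 0 ∧ B * K = K * Q σ τ := by
  obtain ⟨U, hU, k, hk⟩ := exists_unitary_col hv
  have hU1 := Matrix.mem_unitaryGroup_iff.1 hU
  have hU2 := Matrix.mem_unitaryGroup_iff'.1 hU
  have aux : ∀ M ∈ Matrix.unitaryGroup (Fin 3) ℂ, M.det = 1 → M.mulVec v = v →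
      ∃ s t : ℂ, s * conj s + t * conj t = 1 ∧ M * U = U * Q s t := by
    intro M hM dM fM
    obtain ⟨s, t, hst, e⟩ := eq_Q (N := star U * M * U)
      (mul_mem (mul_mem (Unitary.star_mem hU) hM) hU)
      (by
        have := congrArg Matrix.det hU2
        rw [Matrix.det_mul, Matrix.det_one] at this
        rw [Matrix.det_mul, Matrix.det_mul, dM, mul_one, this])
      (by
        rw [← Matrix.mulVec_mulVec, ← Matrix.mulVec_mulVec, hk, Matrix.mulVec_smul, fM, ← hk,
          Matrix.mulVec_mulVec, hU2, Matrix.one_mulVec])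
    refine ⟨s, t, hst, ?_⟩
    rw [← e, mul_assoc, ← mul_assoc U, hU1, one_mul]
  obtain ⟨s, t, hst, e⟩ := aux A hA dA fA
  obtain ⟨s', t', hst', e'⟩ := aux B hB dB fB
  obtain ⟨K, hK, μ, σ, τ, hnf, k1, k2⟩ := Q_pair_normal hst hst'
  refine ⟨U * K, mul_mem hU hK, μ, σ, τ, hnf, ?_, ?_⟩
  · rw [← mul_assoc, e, mul_assoc, k1, mul_assoc]
  · rw [← mul_assoc, e', mul_assoc, k2, mul_assoc]

lemma trace_of_conj {A K N : Matrix (Fin 3) (Fin 3) ℂ} (hK : K ∈ Matrix.unitaryGroup (Fin 3) ℂ)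
    (h : A * K = K * N) : A.trace = N.trace := by
  have h1 := Matrix.mem_unitaryGroup_iff.1 hK
  have h2 := Matrix.mem_unitaryGroup_iff'.1 hK
  have : A = K * N * star K := by rw [← h, mul_assoc, h1, mul_one]
  rw [this, Matrix.trace_mul_comm, ← mul_assoc, h2, one_mul]

/-- Any unitary matrix is a unit scalar multiple of a special unitary one. -/
lemma exists_scalar_SU {V : Matrix (Fin 3) (Fin 3) ℂ} (hV : V ∈ Matrix.unitaryGroup (Fin 3) ℂ) :
    ∃ (l : ℂ) (U : SU 3), matSU U = l • V := by
  have hdet : star V.det * V.det = 1 := by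
    have := congrArg Matrix.det (Matrix.mem_unitaryGroup_iff'.1 hV)
    rwa [Matrix.det_mul, Matrix.star_eq_conjTranspose, Matrix.det_conjTranspose,
      Matrix.det_one] at this
  obtain ⟨l, hl⟩ := IsAlgClosed.exists_pow_nat_eq (star V.det) (n := 3) (by norm_num)
  have hnd : ‖V.det‖ = 1 := by
    have := congrArg norm hdet
    rw [norm_mul, norm_star, norm_one] at this
    nlinarith [norm_nonneg V.det]
  have hl1 : ‖l‖ = 1 := by
    have := congrArg norm hl
    rw [norm_pow, norm_star, hnd] at this
    exact (pow_eq_one_iff_of_nonneg (norm_nonneg _) (by norm_num)).1 this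
  have hmem : l • V ∈ Matrix.unitaryGroup (Fin 3) ℂ := by
    rw [Matrix.mem_unitaryGroup_iff, star_smul, smul_mul_smul_comm,
      Matrix.mem_unitaryGroup_iff.1 hV, Complex.star_def, Complex.mul_conj', hl1]
    simp
  refine ⟨l, ⟨⟨l • V, hmem⟩, ?_⟩, rfl⟩
  show (l • V).det = 1
  rw [Matrix.det_smul, Fintype.card_fin, hl, hdet]

/-- Pairs in `SU(3)` with a common fixed vector are conjugate as soon as `tr A`, `tr B` and
`tr AB` agree. -/
lemma pair_conj {A B A' B' : SU 3} {v v' : Fin 3 → ℂ} (hv : v ≠ 0) (hv' : v' ≠ 0)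
    (fA : (matSU A).mulVec v = v) (fB : (matSU B).mulVec v = v)
    (fA' : (matSU A').mulVec v' = v') (fB' : (matSU B').mulVec v' = v')
    (tA : (matSU A).trace = (matSU A').trace) (tB : (matSU B).trace = (matSU B').trace)
    (tAB : (matSU (A * B)).trace = (matSU (A' * B')).trace) :
    ∃ U : SU 3, A' = U * A * U⁻¹ ∧ B' = U * B * U⁻¹ := by
  obtain ⟨K, hK, μ, σ, τ, hnf, k1, k2⟩ :=
    pair_normal A.1.2 B.1.2 A.2 B.2 hv fA fB
  obtain ⟨K', hK', μ', σ', τ', hnf', k1', k2'⟩ :=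
    pair_normal A'.1.2 B'.1.2 A'.2 B'.2 hv' fA' fB'
  have k3 : matSU (A * B) * K = K * (Q μ 0 * Q σ τ) := by
    rw [matSU_mul, mul_assoc, k2, ← mul_assoc, k1, mul_assoc]
  have k3' : matSU (A' * B') * K' = K' * (Q μ' 0 * Q σ' τ') := by
    rw [matSU_mul, mul_assoc, k2', ← mul_assoc, k1', mul_assoc]
  rw [trace_of_conj hK k1, trace_of_conj hK' k1', Q_trace, Q_trace] at tA
  rw [trace_of_conj hK k2, trace_of_conj hK' k2', Q_trace, Q_trace] at tB
  rw [trace_of_conj hK k3, trace_of_conj hK' k3', Q_mul, Q_mul, Q_trace, Q_trace] at tAB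
  simp only [map_zero, zero_mul, sub_zero] at tAB
  obtain ⟨rfl, rfl, rfl⟩ := hnf.unique hnf' (by simpa using tA) (by simpa using tB)
    (by exact_mod_cast mul_left_cancel₀ two_ne_zero (add_left_cancel tAB))
  obtain ⟨l, U, hU⟩ := exists_scalar_SU (mul_mem hK' (Unitary.star_mem hK))
  have K1 := Matrix.mem_unitaryGroup_iff'.1 hK
  have K2 := Matrix.mem_unitaryGroup_iff.1 hK
  have conj_of : ∀ (M M' : SU 3) (N : Matrix (Fin 3) (Fin 3) ℂ), matSU M * K = K * N →
      matSU M' * K' = K' * N → M' = U * M * U⁻¹ := by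
    intro M M' N h h'
    rw [eq_mul_inv_iff_mul_eq]
    apply Subtype.ext
    apply Subtype.ext
    show matSU M' * matSU U = matSU U * matSU M
    have hM : star K * matSU M = N * star K := by
      have := congrArg (fun X => star K * X * star K) h
      rwa [← mul_assoc, mul_assoc _ K, K2, mul_one, ← mul_assoc, K1, one_mul] at this
    rw [hU, mul_smul_comm, smul_mul_assoc, ← mul_assoc, h', mul_assoc K' (star K), hM, mul_assoc]
  exact ⟨U, conj_of A A' _ k1 k1', conj_of B B' _ k2 k2'⟩

end NormalForm

/-- If `α_t`, `t ∈ [0,1]`, is a family of homomorphisms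
`π₁(Σ(p,q,r)) → SU(3)`, continuous in `t` for each group element, with `α_0` and `α_1` both
reducible, then `α_0` and `α_1` are conjugate by an element of `SU(3)`. -/
theorem reducible_endpoints_conjugate (p q r : ℕ) (hp : 0 < p) (hq : 0 < q) (hr : 0 < r)
    (hpq : Nat.Coprime p q) (hqr : Nat.Coprime q r) (hpr : Nat.Coprime p r)
    (a c : ℤ) (hac : a * ((p : ℤ) + q) * r + c * p * q = 1)
    (α : Set.Icc (0 : ℝ) 1 → (BrieskornGroup p q r a c →* SU 3))
    (hcont : ∀ g : BrieskornGroup p q r a c, Continuous fun t => matSU (α t g))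
    (h0 : ¬ IsIrrep (α ⟨0, by constructor <;> norm_num⟩))
    (h1 : ¬ IsIrrep (α ⟨1, by constructor <;> norm_num⟩)) :
    ∃ U : SU 3, ∀ g : BrieskornGroup p q r a c,
      α ⟨1, by constructor <;> norm_num⟩ g
        = U * α ⟨0, by constructor <;> norm_num⟩ g * U⁻¹ := by
  obtain ⟨v, hv, fv⟩ := exists_fixed hpq hqr hpr hac _ h0
  obtain ⟨v', hv', fv'⟩ := exists_fixed hpq hqr hpr hac _ h1
  have hxy : ((x * y : BrieskornGroup p q r a c)) ^ r = h ^ (-c) := by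
    rw [← inv_inv (x * y), ← z_eq, inv_pow, z_pow, zpow_neg]
  obtain ⟨U, hx, hy⟩ := pair_conj hv hv' (fv x) (fv y) (fv' x) (fv' y)
    (trace_const hpq hqr hpr hac α hcont x p hp a x_pow _ _)
    (trace_const hpq hqr hpr hac α hcont y q hq a y_pow _ _)
    (by
      rw [← map_mul, ← map_mul]
      exact trace_const hpq hqr hpr hac α hcont (x * y) r hr (-c) hxy _ _)
  refine ⟨U, fun g => ?_⟩
  have key := hom_ext_xy hac (f := α ⟨1, by constructor <;> norm_num⟩)
    (g := (MulAut.conj U).toMonoidHom.comp (α ⟨0, by constructor <;> norm_num⟩))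
    (by simpa [MulAut.conj_apply] using hx) (by simpa [MulAut.conj_apply] using hy)
  simpa [MulAut.conj_apply] using DFunLike.congr_fun key g
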